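/- Let H_n be the physicists' Hermite polynomials, D = {d_1 < … < d_M} a finite set of positive integers, and N ∈ ℕ with N ∉ D. Set Ξ_D = W[H_{d_1},…,H_{d_M}] and P_{D,N} = W[H_{d_1},…,H_{d_M},H_N]. Fix j ∈ {1,…,M} and ε ∈ {0,…,d_j−1} \ D, and let Ξ_{D′} = W[H_{d_1},…,H_{d_{j−1}},H_ε,H_{d_{j+1}},…,H_{d_M}] and P = P_{D′,N} = W[H_{d_1},…,H_{d_{j−1}},H_ε,H_{d_{j+1}},…,H_{d_M},H_N]. Set Ẽ = 2(d_j + ε − N) and E′ = 4(N − ε). Then the following identity holds in ℝ[X]: Ξ_D·(−P″ + 2·X·P′) + 2·(Ξ_D)′·P′ − (Ξ_D)″·P − 2·X·(Ξ_D)′·P + (2M − Ẽ)·Ξ_D·P = E′·P_{D,N}·Ξ_{D′}, where ′ and ″ denote first and second polynomial derivatives. -/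

import Mathlib

/-!
The identity is covariant under Darboux transformations, which reduces it to `M = 1`.

Work in the fraction field of `ℝ[X]`, with its derivation, and consider solutions of the family of
equations `y″ = 2X·y′ + (U − λ)·y` with a common potential `U`; for `U = 0` and `λ = 2n` the
polynomial `H_n` is a solution. If `f` is a nonzero solution with parameter `λ₀` and `v = f′/f`,
then `g ↦ g′ − v·g` carries solutions to solutions with the same parameter for the potential
`U + 2 − 2v′` (`darboux_ode`), and it kills no nonzero solution with a parameter other than `λ₀`
(`darboux_ne_zero`), so that the step can be iterated. Row operations give
`W[f, g_1, …, g_k] = f · W[g_1′ − v g_1, …, g_k′ − v g_k]` (`wr_cons`).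

For solutions `F_1, …, F_m, a, e, n`, the bilinear identity relating `W[F,a]`, `W[F,e,n]`,
`W[F,a,n]` and `W[F,e]`, with a potential term `U·W[F,a]·W[F,e,n]` added, is preserved by each step:
the factor `f` common to all four Wronskians produces exactly the change of potential. After `m`
steps no `F` is left and the identity is a direct computation (`bilinear`). The column `j` of the
original Wronskians is first moved to the last place among the `d`-columns by a transposition, whose
sign cancels (`wronskian_comp_perm`).
-/

open Polynomial

/-- The physicists' Hermite polynomials: `H_0 = 1`, `H_{n+1} = 2·X·H_n − H_n′`. -/
noncomputable def hermiteP : ℕ → Polynomial ℝ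
  | 0 => 1
  | n + 1 => 2 * Polynomial.X * hermiteP n - Polynomial.derivative (hermiteP n)

/-- The Wronskian `W[f_1,…,f_m]`: determinant of the matrix whose `(i,j)` entry is the
`i`-th derivative of `f j` (indices starting from `0`). -/
noncomputable def wronskian {m : ℕ} (f : Fin m → Polynomial ℝ) : Polynomial ℝ :=
  (Matrix.of fun i j : Fin m => Polynomial.derivative^[(i : ℕ)] (f j)).det

/-- The Krein–Adler polynomial `P_{D,n} = W[H_{d_1},…,H_{d_M},H_n]` based on the
physicists' Hermite polynomials. -/
noncomputable def KAHermite {M : ℕ} (d : Fin M → ℕ) (n : ℕ) : Polynomial ℝ :=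
  wronskian (Fin.snoc (fun j => hermiteP (d j)) (hermiteP n))

/-- The denominator polynomial `Ξ_D = W[H_{d_1},…,H_{d_M}]`. -/
noncomputable def XiHermite {M : ℕ} (d : Fin M → ℕ) : Polynomial ℝ :=
  wronskian (fun j => hermiteP (d j))

/-! ### Wronskians and Darboux transformations in a differential field -/

section Darboux

variable {K : Type*} [Field K] (D : Derivation ℤ K K)

/-- The Wronskian of a family of elements of a field with respect to a derivation `D`. -/
noncomputable def wr {m : ℕ} (g : Fin m → K) : K :=
  (Matrix.of fun i j : Fin m => D^[(i : ℕ)] (g j)).det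

/-- The Darboux transform `g ↦ g′ − (f′/f)·g` with seed `f`. -/
noncomputable def darboux (f g : K) : K := D g - D f / f * g

/-- `D^i` after the Darboux transform is a monic differential operator of order `i + 1`. -/
lemma iterate_darboux (f : K) (i : ℕ) : ∃ c : ℕ → K, ∀ g,
    D^[i] (darboux D f g) = D^[i + 1] g + ∑ k ∈ Finset.range (i + 1), c k * D^[k] g := by
  induction i with
  | zero => exact ⟨fun _ => -(D f / f), fun g => by simp [darboux]; ring⟩
  | succ i ih =>
    obtain ⟨c, hc⟩ := ih
    refine ⟨fun k => (if k < i + 1 then D (c k) else 0) + if k = 0 then 0 else c (k - 1),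
      fun g => ?_⟩
    rw [Function.iterate_succ_apply', hc, map_add, ← Function.iterate_succ_apply' (f := D), map_sum]
    congr 1
    simp only [Derivation.leibniz, smul_eq_mul, add_mul, Finset.sum_add_distrib]
    rw [Finset.sum_range_succ (fun k => (if k < i + 1 then D (c k) else 0) * D^[k] g),
      Finset.sum_range_succ' (fun k => (if k = 0 then 0 else c (k - 1)) * D^[k] g), add_comm]
    simp only [lt_irrefl, if_false, zero_mul, add_zero, if_true, Nat.succ_ne_zero,
      Nat.add_sub_cancel, Function.iterate_succ_apply']
    congr 1
    refine Finset.sum_congr rfl fun k hk => ?_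
    rw [if_pos (Finset.mem_range.1 hk), mul_comm]

/-- A seed placed in the first column of a Wronskian splits off as a factor, the remaining columns
undergoing the Darboux transform. -/
lemma wr_cons {k : ℕ} (f : K) (hf : f ≠ 0) (G : Fin k → K) :
    wr D (Fin.cons f G : Fin (k + 1) → K) = f * wr D (fun i => darboux D f (G i)) := by
  choose c hc using iterate_darboux D f
  -- The unitriangular matrix of row operations.
  let T : Matrix (Fin (k + 1)) (Fin (k + 1)) K := Matrix.of fun i l =>
    if i = l then 1 else if (l : ℕ) < i then c (i - 1) l else 0
  let Mx : Matrix (Fin (k + 1)) (Fin (k + 1)) K :=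
    Matrix.of fun i j => D^[(i : ℕ)] ((Fin.cons f G : Fin (k + 1) → K) j)
  have hT : T.det = 1 := by
    rw [Matrix.det_of_isLowerTriangular]
    · simp [T]
    · intro i l hil
      have : i < l := hil
      simp [T, this.ne, not_lt.2 this.le]
  have hrow : ∀ (i : Fin k) (j : Fin (k + 1)), (T * Mx) i.succ j =
      D^[(i : ℕ)] (darboux D f ((Fin.cons f G : Fin (k + 1) → K) j)) := by
    intro i j
    set g := (Fin.cons f G : Fin (k + 1) → K) j with hg
    let t : ℕ → K := fun l => (if (i : ℕ) + 1 = l then 1 else if l < i + 1 then c i l else 0)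
      * D^[l] g
    have h1 : (T * Mx) i.succ j = ∑ l : Fin (k + 1), t l := by
      rw [Matrix.mul_apply]
      refine Finset.sum_congr rfl fun l _ => ?_
      simp [T, Mx, t, Fin.ext_iff, hg, -Fin.val_fin_lt]
    rw [h1, Fin.sum_univ_eq_sum_range t, hc]
    have h2 : Finset.range (i + 2) ⊆ Finset.range (k + 1) := by
      intro l; simp only [Finset.mem_range]; have := i.2; omega
    rw [← Finset.sum_subset h2, Finset.sum_range_succ, add_comm]
    · congr 1
      · simp [t]
      · refine Finset.sum_congr rfl fun l hl => ?_
        have := Finset.mem_range.1 hl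
        simp only [t]
        rw [if_neg (by omega), if_pos this]
    · intro l _ hl
      have : i + 2 ≤ l := by simpa using hl
      simp only [t]
      rw [if_neg (by omega), if_neg (by omega), zero_mul]
  have hrow0 : ∀ j : Fin (k + 1), (T * Mx) 0 j = (Fin.cons f G : Fin (k + 1) → K) j := by
    intro j
    rw [Matrix.mul_apply, Finset.sum_eq_single 0]
    · simp [T, Mx]
    · intro l _ hl
      simp [T, hl.symm]
    · simp
  have hdf : darboux D f f = 0 := by simp [darboux, hf]
  have hdet : wr D (Fin.cons f G : Fin (k + 1) → K) = (T * Mx).det := by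
    rw [Matrix.det_mul, hT, one_mul]; rfl
  rw [hdet, Matrix.det_succ_column_zero, Finset.sum_eq_single 0]
  · rw [hrow0]
    simp only [Fin.val_zero, pow_zero, one_mul, Fin.cons_zero, wr]
    congr 2
    ext i j
    simp [hrow]
  · intro i _ hi
    obtain ⟨i, rfl⟩ := Fin.exists_succ_eq.2 hi
    rw [hrow, Fin.cons_zero, hdf]
    simp
  · simp

variable {D} {x U : K}

/-- The Riccati equation for the logarithmic derivative of a solution. -/
lemma riccati {f l : K} (hf : f ≠ 0) (hfo : D (D f) = 2 * x * D f + (U - l) * f) :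
    D (D f / f) = 2 * x * (D f / f) + (U - l) - (D f / f) ^ 2 := by
  have h : D f = D f / f * f := by field_simp
  have h2 := congrArg D h
  rw [Derivation.leibniz, hfo, smul_eq_mul, smul_eq_mul] at h2
  apply mul_left_cancel₀ hf
  linear_combination (-1 : K) * h2 + (2 * x - D f / f) * h

/-- The Darboux transform maps solutions to solutions with the same parameter, for a new
potential. -/
lemma darboux_ode (hx : D x = 1) {f l g p : K} (hf : f ≠ 0) (hl : D l = 0) (hp : D p = 0)
    (hfo : D (D f) = 2 * x * D f + (U - l) * f)
    (hgo : D (D g) = 2 * x * D g + (U - p) * g) :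
    D (D (darboux D f g)) = 2 * x * D (darboux D f g) +
      (U + 2 - 2 * D (D f / f) - p) * darboux D f g := by
  have hv := riccati hf hfo
  have h2 : D (2 : K) = 0 := by simpa using D.map_natCast 2
  have hv2 := congrArg D hv
  have hg3 := congrArg D hgo
  unfold darboux
  generalize D f / f = v at *
  simp only [pow_two, map_add, map_sub, Derivation.leibniz, smul_eq_mul, hx, hl, hp, h2]
    at hv2 hg3 ⊢
  linear_combination hg3 - g * hv2 - v * hgo

lemma darboux_ne_zero {f l g p : K} (hf : f ≠ 0) (hg : g ≠ 0) (hlp : l ≠ p)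
    (hfo : D (D f) = 2 * x * D f + (U - l) * f)
    (hgo : D (D g) = 2 * x * D g + (U - p) * g) : darboux D f g ≠ 0 := by
  intro h
  have hv := riccati hf hfo
  unfold darboux at h
  generalize D f / f = v at *
  have hD := congrArg D h
  simp only [map_sub, Derivation.leibniz, smul_eq_mul, map_zero] at hD
  -- `g′ = v g` and the Riccati equation make `g` a solution with parameter `l` as well.
  have : (l - p) * g = 0 := by
    linear_combination hD - hgo + g * hv + (v - 2 * x) * h
  rcases mul_eq_zero.1 this with h1 | h1
  · exact hlp (sub_eq_zero.1 h1)
  · exact hg h1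

/-- The basic equation for solutions `F_1, …, F_m, a, e, n` of the equations with a common
potential `U`. -/
theorem bilinear (hx : D x = 1) {la le ln : K}
    (hla : D la = 0) (hle : D le = 0) (hln : D ln = 0) (m : ℕ) :
    ∀ (U a e n : K) (F l : Fin m → K), (∀ k, F k ≠ 0) → Function.Injective l →
    (∀ k, D (l k) = 0) →
    (∀ k, D (D (F k)) = 2 * x * D (F k) + (U - l k) * F k) →
    D (D a) = 2 * x * D a + (U - la) * a →
    D (D e) = 2 * x * D e + (U - le) * e →
    D (D n) = 2 * x * D n + (U - ln) * n →
    ∀ A B C E : K,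
      A = wr D (Fin.snoc F a : Fin (m + 1) → K) →
      B = wr D (Fin.snoc (Fin.snoc F e : Fin (m + 1) → K) n : Fin (m + 2) → K) →
      C = wr D (Fin.snoc (Fin.snoc F a : Fin (m + 1) → K) n : Fin (m + 2) → K) →
      E = wr D (Fin.snoc F e : Fin (m + 1) → K) →
      A * (-D (D B) + 2 * x * D B) + 2 * D A * D B - D (D A) * B - 2 * x * D A * B
        + (2 * (m + 1 : K) - (la + le - ln) + U) * A * B = 2 * (ln - le) * C * E := by
  have h2 : D (2 : K) = 0 := by simpa using D.map_natCast 2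
  induction m with
  | zero =>
    intro U a e n F l _ _ _ _ ha he hn A B C E hA hB hC hE
    have w1 : ∀ y : K, wr D (Fin.snoc F y : Fin 1 → K) = y := by
      intro y; simp [wr, Fin.snoc]
    have w2 : ∀ y z : K, wr D (Fin.snoc (Fin.snoc F y : Fin 1 → K) z : Fin 2 → K)
        = y * D z - z * D y := by
      intro y z; simp [wr, Matrix.det_fin_two, Fin.snoc]
    rw [w1] at hA hE
    rw [w2] at hB hC
    have hB1 : D B = 2 * x * B + (le - ln) * e * n := by
      rw [hB]
      simp only [map_sub, Derivation.leibniz, smul_eq_mul, he, hn]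
      ring
    have hB2 := congrArg D hB1
    simp only [map_add, map_sub, Derivation.leibniz, smul_eq_mul, hx, h2, hle, hln] at hB2
    rw [hB2, hA, hC, hE, ha]
    rw [hB1, hB]
    push_cast
    ring
  | succ m ih =>
    intro U a e n F l hF hl hlc hFo ha he hn A B C E hA hB hC hE
    obtain ⟨f, G, rfl⟩ : ∃ f G, F = Fin.cons f G := ⟨F 0, Fin.tail F, (Fin.cons_self_tail F).symm⟩
    have hf : f ≠ 0 := by simpa using hF 0
    have hfo : D (D f) = 2 * x * D f + (U - l 0) * f := by simpa using hFo 0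
    have w1 : ∀ y : K, wr D (Fin.snoc (Fin.cons f G : Fin (m + 1) → K) y : Fin (m + 2) → K) =
        f * wr D (Fin.snoc (fun i => darboux D f (G i)) (darboux D f y) : Fin (m + 1) → K) := by
      intro y
      rw [← Fin.cons_snoc_eq_snoc_cons, wr_cons D f hf]
      congr 2
      exact Fin.comp_snoc (darboux D f) G y
    have w2 : ∀ y z : K, wr D (Fin.snoc (Fin.snoc (Fin.cons f G : Fin (m + 1) → K) y :
          Fin (m + 2) → K) z : Fin (m + 3) → K) =
        f * wr D (Fin.snoc (Fin.snoc (fun i => darboux D f (G i)) (darboux D f y) :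
          Fin (m + 1) → K) (darboux D f z) : Fin (m + 2) → K) := by
      intro y z
      rw [← Fin.cons_snoc_eq_snoc_cons, ← Fin.cons_snoc_eq_snoc_cons, wr_cons D f hf]
      congr 2
      refine (Fin.comp_snoc (darboux D f) _ z).trans ?_
      congr 1
      exact Fin.comp_snoc (darboux D f) G y
    rw [w1] at hA hE
    rw [w2] at hB hC
    have key := ih (U + 2 - 2 * D (D f / f)) (darboux D f a) (darboux D f e) (darboux D f n)
      (fun i => darboux D f (G i)) (fun i => l i.succ)
      (fun k => darboux_ne_zero hf (by simpa using hF k.succ)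
        (fun h => (Fin.succ_ne_zero k) (hl h).symm) hfo (by simpa using hFo k.succ))
      (fun i j h => Fin.succ_injective _ (hl h)) (fun k => hlc _)
      (fun k => darboux_ode hx hf (hlc _) (hlc _) hfo (by simpa using hFo k.succ))
      (darboux_ode hx hf (hlc _) hla hfo ha) (darboux_ode hx hf (hlc _) hle hfo he)
      (darboux_ode hx hf (hlc _) hln hfo hn) _ _ _ _ rfl rfl rfl rfl
    have hv : D (D f) = D (D f / f) * f + D f / f * D f := by
      have h : D f = D f / f * f := by field_simp
      have := congrArg D h
      rw [Derivation.leibniz, smul_eq_mul, smul_eq_mul] at this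
      linear_combination this
    have h1 : D f = D f / f * f := by field_simp
    generalize wr D (Fin.snoc (fun i => darboux D f (G i)) (darboux D f a) : Fin (m + 1) → K) = A₁
      at *
    generalize wr D (Fin.snoc (fun i => darboux D f (G i)) (darboux D f e) : Fin (m + 1) → K) = E₁
      at *
    generalize wr D (Fin.snoc (Fin.snoc (fun i => darboux D f (G i)) (darboux D f e) :
          Fin (m + 1) → K) (darboux D f n) : Fin (m + 2) → K) = B₁ at *
    generalize wr D (Fin.snoc (Fin.snoc (fun i => darboux D f (G i)) (darboux D f a) :
          Fin (m + 1) → K) (darboux D f n) : Fin (m + 2) → K) = C₁ at *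
    generalize D f / f = v at *
    rw [hA, hB, hC, hE]
    simp only [map_add, Derivation.leibniz, smul_eq_mul]
    rw [hv, h1]
    push_cast
    linear_combination f ^ 2 * key

end Darboux

/-! ### The derivation of the fraction field -/

/-- The derivation of `ℝ[X]` extends to its fraction field. The extension is the second component
of the lift of the ring homomorphism `p ↦ p + p′·ε` to the dual numbers over the fraction field. -/
lemma exists_derivation_extension (K : Type*) [Field K] [Algebra ℝ[X] K] [IsFractionRing ℝ[X] K] :
    ∃ D : Derivation ℤ K K, ∀ p : ℝ[X], D (algebraMap _ _ p) = algebraMap _ _ (derivative p) := by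
  let ι := algebraMap ℝ[X] K
  let φ : ℝ[X] →+* TrivSqZeroExt K K :=
    { toFun := fun p => TrivSqZeroExt.inl (ι p) + TrivSqZeroExt.inr (ι (derivative p))
      map_one' := by ext <;> simp
      map_zero' := by ext <;> simp
      map_add' := fun p q => by ext <;> simp
      map_mul' := fun p q => by
        ext
        · simp
        · simp
          ring }
  have hφ : ∀ y : nonZeroDivisors ℝ[X], IsUnit (φ y) := by
    intro y
    rw [TrivSqZeroExt.isUnit_iff_isUnit_fst]
    have h : (φ y).fst = ι y := by simp [φ]
    rw [h]
    exact IsLocalization.map_units K y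
  let ψ : K →+* TrivSqZeroExt K K := IsLocalization.lift hφ
  have hψ : ∀ p, ψ (ι p) = φ p := fun p => IsLocalization.lift_eq hφ p
  have hfst : ∀ z, (ψ z).fst = z := by
    have : (TrivSqZeroExt.fstHom K K K).toRingHom.comp ψ = RingHom.id K := by
      apply IsLocalization.ringHom_ext (nonZeroDivisors ℝ[X])
      refine RingHom.ext fun p => ?_
      change (ψ (ι p)).fst = ι p
      rw [hψ]
      simp [φ]
    exact fun z => RingHom.congr_fun this z
  let δ : K →+ K :=
    { toFun := fun z => (ψ z).snd
      map_zero' := by simp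
      map_add' := fun a b => by simp }
  refine ⟨Derivation.mk' δ.toIntLinearMap fun a b => ?_, fun p => ?_⟩
  · change (ψ (a * b)).snd = a • (ψ b).snd + b • (ψ a).snd
    rw [map_mul, TrivSqZeroExt.snd_mul, hfst, hfst, op_smul_eq_smul]
  · change (ψ (ι p)).snd = _
    rw [hψ]
    change (TrivSqZeroExt.inl _ + TrivSqZeroExt.inr _ : TrivSqZeroExt K K).snd = _
    rw [TrivSqZeroExt.snd_add, TrivSqZeroExt.snd_inl, TrivSqZeroExt.snd_inr, zero_add]

/-! ### Hermite polynomials and their Wronskians -/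

lemma hermiteP_ode (n : ℕ) : derivative (derivative (hermiteP n)) =
    2 * X * derivative (hermiteP n) - 2 * (n : ℝ[X]) * hermiteP n := by
  induction n with
  | zero => simp [hermiteP]
  | succ n ih =>
    have h1 : derivative (hermiteP (n + 1)) = (2 * n + 2) * hermiteP n := by
      simp only [hermiteP, derivative_sub, derivative_mul, derivative_X, ih, derivative_ofNat]
      ring
    rw [h1]
    have h2 : derivative ((2 * (n : ℝ[X]) + 2) * hermiteP n) =
        (2 * (n : ℝ[X]) + 2) * derivative (hermiteP n) := by simp
    rw [h2, hermiteP]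
    push_cast
    ring

lemma hermiteP_ne_zero (n : ℕ) : hermiteP n ≠ 0 := by
  induction n with
  | zero => simp [hermiteP]
  | succ n ih =>
    intro h
    have h1 : derivative (hermiteP (n + 1)) = (2 * n + 2) * hermiteP n := by
      simp only [hermiteP, derivative_sub, derivative_mul, derivative_X, hermiteP_ode,
        derivative_ofNat]
      ring
    rw [h, derivative_zero] at h1
    rcases mul_eq_zero.1 h1.symm with h2 | h2
    · have : ((2 * n + 2 : ℕ) : ℝ[X]) = 0 := by exact_mod_cast h2
      rw [Nat.cast_eq_zero] at this
      omega
    · exact ih h2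

lemma wronskian_comp_perm {m : ℕ} (σ : Equiv.Perm (Fin m)) (f : Fin m → ℝ[X]) :
    wronskian (f ∘ σ) = (Equiv.Perm.sign σ : ℤ) * wronskian f := by
  unfold _root_.wronskian
  rw [← Matrix.det_permute']
  rfl

lemma map_wronskian {K : Type*} [Field K] [Algebra ℝ[X] K] (D : Derivation ℤ K K)
    (hD : ∀ p : ℝ[X], D (algebraMap _ _ p) = algebraMap _ _ (derivative p))
    {m : ℕ} (f : Fin m → ℝ[X]) :
    algebraMap ℝ[X] K (wronskian f) = wr D (fun i => algebraMap ℝ[X] K (f i)) := by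
  unfold _root_.wronskian wr
  rw [RingHom.map_det]
  congr 1
  ext i j
  simp only [RingHom.mapMatrix_apply, Matrix.map_apply, Matrix.of_apply]
  generalize (i : ℕ) = k
  induction k with
  | zero => rfl
  | succ k ih => rw [Function.iterate_succ_apply', Function.iterate_succ_apply', ← ih, hD]

/-- The basic equation with the exchanged column in the last place among the `d`-columns. -/
lemma basic_equation_last (K : Type*) [Field K] [Algebra ℝ[X] K] [IsFractionRing ℝ[X] K]
    (m N a ε : ℕ) (b : Fin m → ℕ) (hb : Function.Injective b)
    (A B P E : ℝ[X])
    (hA : A = XiHermite (Fin.snoc b a : Fin (m + 1) → ℕ))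
    (hB : B = KAHermite (Fin.snoc b ε : Fin (m + 1) → ℕ) N)
    (hP : P = KAHermite (Fin.snoc b a : Fin (m + 1) → ℕ) N)
    (hE : E = XiHermite (Fin.snoc b ε : Fin (m + 1) → ℕ)) :
    A * (-derivative (derivative B) + 2 * X * derivative B) + 2 * derivative A * derivative B
      - derivative (derivative A) * B - 2 * X * derivative A * B
      + (2 * ((m : ℝ[X]) + 1) - 2 * ((a : ℝ[X]) + (ε : ℝ[X]) - (N : ℝ[X]))) * A * B =
        4 * ((N : ℝ[X]) - (ε : ℝ[X])) * P * E := by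
  obtain ⟨D, hD⟩ := exists_derivation_extension K
  let ι := algebraMap ℝ[X] K
  have hι : Function.Injective ι := IsFractionRing.injective ℝ[X] K
  have hc : ∀ n : ℕ, D (ι (2 * (n : ℝ[X]))) = 0 := fun n => by
    rw [hD]; simp
  have hode : ∀ n : ℕ, D (D (ι (hermiteP n))) =
      2 * ι X * D (ι (hermiteP n)) + (0 - ι (2 * (n : ℝ[X]))) * ι (hermiteP n) := by
    intro n
    rw [hD, hD, hermiteP_ode]
    simp only [map_sub, map_mul, map_ofNat, ι]
    ring
  have hs1 : ∀ y : ℕ, ι (XiHermite (Fin.snoc b y : Fin (m + 1) → ℕ)) =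
      wr D (Fin.snoc (fun k => ι (hermiteP (b k))) (ι (hermiteP y)) : Fin (m + 1) → _) := by
    intro y
    rw [XiHermite, map_wronskian D hD]
    congr 1
    exact Fin.comp_snoc (fun k => ι (hermiteP k)) b y
  have hs2 : ∀ y : ℕ, ι (KAHermite (Fin.snoc b y : Fin (m + 1) → ℕ) N) =
      wr D (Fin.snoc (Fin.snoc (fun k => ι (hermiteP (b k))) (ι (hermiteP y)) :
        Fin (m + 1) → _) (ι (hermiteP N)) : Fin (m + 2) → _) := by
    intro y
    rw [KAHermite, map_wronskian D hD]
    congr 1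
    refine (Fin.comp_snoc ι _ (hermiteP N)).trans ?_
    congr 1
    exact Fin.comp_snoc (fun k => ι (hermiteP k)) b y
  have key := bilinear (D := D) (x := ι X) (by rw [hD]; simp) (hc a) (hc ε) (hc N) m 0
    (ι (hermiteP a)) (ι (hermiteP ε)) (ι (hermiteP N)) (fun k => ι (hermiteP (b k)))
    (fun k => ι (2 * (b k : ℝ[X])))
    (fun k h => hermiteP_ne_zero (b k) (hι (h.trans (map_zero ι).symm)))
    (fun i k h => by
      have h1 := hι h
      have h2 : ((2 * b i : ℕ) : ℝ[X]) = ((2 * b k : ℕ) : ℝ[X]) := by push_cast; exact h1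
      have h3 := Nat.cast_injective h2
      exact hb (by omega))
    (fun k => hc _) (fun k => hode _) (hode a) (hode ε) (hode N)
    (ι A) (ι B) (ι P) (ι E) (by rw [hA, hs1]) (by rw [hB, hs2]) (by rw [hP, hs2])
    (by rw [hE, hs1])
  apply hι
  simp only [ι, hD] at key
  simp only [map_sub, map_add, map_mul, map_neg, map_ofNat, map_natCast, map_one, ι] at key ⊢
  linear_combination key

/-- **The basic equation** `Ξ_D·(H̃_D P_{D′,N} − Ẽ(D′)·P_{D′,N}) = ℰ′(D′)·P_{D,N}·Ξ_{D′}`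
for the Krein–Adler Hermite system, multiplied through by `Ξ_D` to give a polynomial
identity, with `Ẽ = 2(d_j + ε − N)` and `E′ = 4(N − ε)`. -/
theorem KA_hermite_basic_equation
    (M N : ℕ) (d : Fin M → ℕ) (hpos : ∀ k, 0 < d k) (hmono : StrictMono d)
    (hN : ∀ k, N ≠ d k)
    (j : Fin M) (ε : ℕ) (hε : ε < d j) (hεD : ∀ k, ε ≠ d k)
    (Etil E' : ℝ)
    (hEtil : Etil = 2 * ((d j : ℝ) + (ε : ℝ) - (N : ℝ)))
    (hE' : E' = 4 * ((N : ℝ) - (ε : ℝ))) :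
    XiHermite d *
        (-(Polynomial.derivative (Polynomial.derivative (KAHermite (Function.update d j ε) N))) +
          2 * Polynomial.X * Polynomial.derivative (KAHermite (Function.update d j ε) N)) +
      2 * Polynomial.derivative (XiHermite d) *
        Polynomial.derivative (KAHermite (Function.update d j ε) N) -
      Polynomial.derivative (Polynomial.derivative (XiHermite d)) *
        KAHermite (Function.update d j ε) N -
      2 * Polynomial.X * Polynomial.derivative (XiHermite d) *
        KAHermite (Function.update d j ε) N +
      Polynomial.C (2 * (M : ℝ) - Etil) * XiHermite d * KAHermite (Function.update d j ε) N
    = Polynomial.C E' * KAHermite d N * XiHermite (Function.update d j ε) := by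
  obtain ⟨m, rfl⟩ : ∃ m, M = m + 1 := ⟨M - 1, by have := j.2; omega⟩
  -- Exchange column `j` with the last of the `d`-columns.
  let σ : Equiv.Perm (Fin (m + 1)) := Equiv.swap j (Fin.last m)
  let τ : Equiv.Perm (Fin (m + 2)) := Equiv.swap j.castSucc (Fin.last m).castSucc
  let b : Fin m → ℕ := fun k => d (σ k.castSucc)
  have hσ : d ∘ σ = (Fin.snoc b (d j) : Fin (m + 1) → ℕ) := by
    funext k
    refine Fin.lastCases ?_ (fun i => ?_) k
    · simp [σ]
    · simp [b]
  have hσ' : Function.update d j ε ∘ σ = (Fin.snoc b ε : Fin (m + 1) → ℕ) := by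
    rw [Function.update_comp_equiv, hσ]
    have : σ.symm j = Fin.last m := by simp [σ]
    rw [this, Fin.update_snoc_last]
  have hb : Function.Injective b := fun i k h =>
    Fin.castSucc_injective _ (σ.injective (hmono.injective h))
  have hτ : ∀ c : Fin (m + 1) → ℕ,
      (Fin.snoc (fun k => hermiteP (c k)) (hermiteP N) : Fin (m + 2) → ℝ[X]) ∘ τ =
        Fin.snoc (fun k => hermiteP ((c ∘ σ) k)) (hermiteP N) := by
    intro c
    funext k
    refine Fin.lastCases ?_ (fun i => ?_) k
    · have : τ (Fin.last (m + 1)) = Fin.last (m + 1) :=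
        Equiv.swap_apply_of_ne_of_ne (Fin.castSucc_lt_last _).ne' (Fin.castSucc_lt_last _).ne'
      simp [this]
    · have : τ i.castSucc = (σ i).castSucc := by
        simp only [τ, σ, Equiv.swap_apply_def, Fin.castSucc_inj]
        split_ifs <;> rfl
      simp only [Function.comp_apply, this, Fin.snoc_castSucc]
  have hXi : ∀ c : Fin (m + 1) → ℕ,
      XiHermite (c ∘ σ) = (Equiv.Perm.sign σ : ℤ) * XiHermite c := fun c =>
    wronskian_comp_perm σ (fun k => hermiteP (c k))
  have hKA : ∀ c : Fin (m + 1) → ℕ,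
      KAHermite (c ∘ σ) N = (Equiv.Perm.sign τ : ℤ) * KAHermite c N := fun c => by
    rw [KAHermite, ← hτ, wronskian_comp_perm]; rfl
  have key := basic_equation_last (FractionRing ℝ[X]) m N (d j) ε b hb _ _ _ _ rfl rfl rfl rfl
  rw [← hσ, ← hσ', hXi, hXi, hKA, hKA] at key
  have hC : C (2 * ((m + 1 : ℕ) : ℝ) - Etil) =
      2 * ((m : ℝ[X]) + 1) - 2 * ((d j : ℝ[X]) + (ε : ℝ[X]) - (N : ℝ[X])) := by
    rw [hEtil]
    simp [C_ofNat]
  have hC' : C E' = 4 * ((N : ℝ[X]) - (ε : ℝ[X])) := by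
    rw [hE']
    simp [C_ofNat]
  rw [hC, hC']
  rcases Int.units_eq_one_or (Equiv.Perm.sign σ) with h | h <;>
  rcases Int.units_eq_one_or (Equiv.Perm.sign τ) with h' | h' <;>
  · rw [h, h'] at key
    simp only [Units.val_one, Units.val_neg, Int.cast_one, Int.cast_neg, one_mul, neg_mul,
      derivative_neg] at key
    first
    | linear_combination key
    | linear_combination -key
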